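/- Let A′ →^ε 𝟙_C →^η E →^δ A′⟦1⟧ be a distinguished triangle in C such that the composite A′ ⊗ A′ →^{ε ⊗ id} 𝟙_C ⊗ A′ ≅ A′ is an isomorphism. Then for all objects X, Y of C, precomposition with the morphism X ≅ 𝟙_C ⊗ X →^{η ⊗ id_X} E ⊗ X induces a bijection Hom_C(E ⊗ X, E ⊗ Y) → Hom_C(X, E ⊗ Y). -/

import Mathlib

open CategoryTheory MonoidalCategory Limits Pretriangulated

/-!
Tensoring the triangle with `A'` shows `E ⊗ A' = 0`, so `A' ⊗ E = 0` by the braiding, and tensoring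
the triangle with `E` then shows that `η ▷ E`, hence also `E ◁ η`, is an isomorphism.

Now let `f : X ⟶ X'` be inverted by `E ⊗ -` and let `η ▷ Z : Z ⟶ E ⊗ Z` have a retraction. Any
`h : X ⟶ Z` extends along `f` as `X' ⟶ E ⊗ X' ≅ E ⊗ X ⟶ E ⊗ Z ⟶ Z`, and an extension `g` is
determined by `E ◁ g`, hence by `h`. Apply this to `f : X ⟶ E ⊗ X` and `Z = E ⊗ Y`.
-/

section Monoidal

variable {C : Type*} [Category C] [MonoidalCategory C]

lemma isIso_whiskerRight_tensor {A B : C} (f : A ⟶ B) (W Y : C) [IsIso (f ▷ W)] :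
    IsIso (f ▷ (W ⊗ Y)) := by
  rw [whiskerRight_tensor]
  infer_instance

lemma isIso_whiskerLeft_whiskerRight {A B : C} (W : C) (f : A ⟶ B) (X : C) [IsIso (W ◁ f)] :
    IsIso (W ◁ f ▷ X) := by
  rw [whisker_assoc_symm]
  infer_instance

lemma isIso_whiskerLeft_iff_isIso_whiskerRight [BraidedCategory C] {A B : C} (f : A ⟶ B) (W : C) :
    IsIso (W ◁ f) ↔ IsIso (f ▷ W) :=
  NatIso.isIso_map_iff (BraidedCategory.tensorLeftIsoTensorRight W) f

variable {E : C} (η : 𝟙_ C ⟶ E)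

lemma eq_of_whiskerLeft_eq {X Z : C} [Mono (η ▷ Z)] {g g' : X ⟶ Z} (h : E ◁ g = E ◁ g') :
    g = g' := by
  have unit_whiskerLeft_eq : 𝟙_ C ◁ g = 𝟙_ C ◁ g' := by
    rw [← cancel_mono (η ▷ Z), whisker_exchange, whisker_exchange, h]
  exact (whiskerLeft_iff g g').1 unit_whiskerLeft_eq

lemma comp_bijective_of_isIso_whiskerLeft {X X' : C} (f : X ⟶ X') (Z : C) [IsIso (E ◁ f)]
    [IsSplitMono (η ▷ Z)] : Function.Bijective (fun g : X' ⟶ Z ↦ f ≫ g) := by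
  constructor
  · intro g g' (h : f ≫ g = f ≫ g')
    apply eq_of_whiskerLeft_eq η
    rw [← cancel_epi (E ◁ f), ← MonoidalCategory.whiskerLeft_comp, h,
      MonoidalCategory.whiskerLeft_comp]
  · intro h
    refine ⟨(λ_ X').inv ≫ η ▷ X' ≫ inv (E ◁ f) ≫ E ◁ h ≫ retraction (η ▷ Z) ≫ (λ_ Z).hom, ?_⟩
    calc f ≫ (λ_ X').inv ≫ η ▷ X' ≫ inv (E ◁ f) ≫ E ◁ h ≫ retraction (η ▷ Z) ≫ (λ_ Z).hom
      _ = (λ_ X).inv ≫ η ▷ X ≫ E ◁ f ≫ inv (E ◁ f) ≫ E ◁ h ≫ retraction (η ▷ Z) ≫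
            (λ_ Z).hom := by
        rw [leftUnitor_inv_naturality_assoc, whisker_exchange_assoc]
      _ = (λ_ X).inv ≫ 𝟙_ C ◁ h ≫ η ▷ Z ≫ retraction (η ▷ Z) ≫ (λ_ Z).hom := by
        rw [IsIso.hom_inv_id_assoc, whisker_exchange_assoc]
      _ = h := by
        rw [IsSplitMono.id_assoc, leftUnitor_naturality, Iso.inv_hom_id_assoc]

lemma unit_comp_bijective (X Y : C) [IsIso (E ◁ η)] [IsIso (η ▷ E)] :
    Function.Bijective (fun g : E ⊗ X ⟶ E ⊗ Y ↦ (λ_ X).inv ≫ η ▷ X ≫ g) := by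
  have := isIso_whiskerRight_tensor η E Y
  have := isIso_whiskerLeft_whiskerRight E η X
  have : IsIso (E ◁ ((λ_ X).inv ≫ η ▷ X)) := by
    rw [MonoidalCategory.whiskerLeft_comp]
    infer_instance
  simpa only [Category.assoc] using
    comp_bijective_of_isIso_whiskerLeft η ((λ_ X).inv ≫ η ▷ X) (E ⊗ Y)

end Monoidal

section Triangulated

variable {C : Type*} [Category C] [MonoidalCategory C] [Preadditive C] [HasZeroObject C]
  [HasShift C ℤ] [∀ n : ℤ, (shiftFunctor C n).Additive] [Pretriangulated C]
  {T : Triangle C}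

lemma isZero_obj₃_tensor_iff_isIso_mor₁_whiskerRight (hT : T ∈ distTriang C) (W : C)
    [(tensorRight W).CommShift ℤ] [(tensorRight W).IsTriangulated] :
    IsZero (T.obj₃ ⊗ W) ↔ IsIso (T.mor₁ ▷ W) :=
  Triangle.isZero₃_iff_isIso₁ _ ((tensorRight W).map_distinguished T hT)

lemma isZero_obj₁_tensor_iff_isIso_mor₂_whiskerRight (hT : T ∈ distTriang C) (W : C)
    [(tensorRight W).CommShift ℤ] [(tensorRight W).IsTriangulated] :
    IsZero (T.obj₁ ⊗ W) ↔ IsIso (T.mor₂ ▷ W) :=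
  Triangle.isZero₁_iff_isIso₂ _ ((tensorRight W).map_distinguished T hT)

end Triangulated

theorem stmt_4_general {C : Type*} [Category C] [MonoidalCategory C] [BraidedCategory C]
    [Preadditive C] [HasZeroObject C] [HasShift C ℤ]
    [∀ n : ℤ, (shiftFunctor C n).Additive] [Pretriangulated C]
    {A' E : C} [(tensorRight A').CommShift ℤ] [(tensorRight A').IsTriangulated]
    [(tensorRight E).CommShift ℤ] [(tensorRight E).IsTriangulated]
    (ε : A' ⟶ 𝟙_ C) (η : 𝟙_ C ⟶ E) (δ : E ⟶ A'⟦(1 : ℤ)⟧)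
    (hT : Triangle.mk ε η δ ∈ distTriang C)
    (hA : IsIso ((ε ▷ A') ≫ (λ_ A').hom)) (X Y : C) :
    Function.Bijective
      (fun g : (E ⊗ X ⟶ E ⊗ Y) => (λ_ X).inv ≫ (η ▷ X) ≫ g) := by
  have isIso_ε : IsIso (ε ▷ A') := IsIso.of_isIso_comp_right _ (λ_ A').hom
  have isZero_tensor : IsZero (E ⊗ A') :=
    (isZero_obj₃_tensor_iff_isIso_mor₁_whiskerRight hT A').2 isIso_ε
  have isIso_η : IsIso (η ▷ E) :=
    (isZero_obj₁_tensor_iff_isIso_mor₂_whiskerRight hT E).1 (isZero_tensor.of_iso (β_ A' E))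
  have := (isIso_whiskerLeft_iff_isIso_whiskerRight η E).2 isIso_η
  exact unit_comp_bijective η X Y

/-- Let `C` be a symmetric monoidal pretriangulated category such that, for every object `W`,
the functors `W ⊗ −` and `− ⊗ W` are additive and triangulated.  If
`A′ →^ε 𝟙_C →^η E →^δ A′⟦1⟧` is a distinguished triangle such that the composite
`A′ ⊗ A′ →^{ε ▷ A′} 𝟙_C ⊗ A′ ≅ A′` is an isomorphism, then for all objects `X, Y`
precomposition with `X ≅ 𝟙_C ⊗ X →^{η ▷ X} E ⊗ X` induces a bijection
`Hom(E ⊗ X, E ⊗ Y) → Hom(X, E ⊗ Y)`. -/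
theorem stmt_4 {C : Type*} [Category C] [MonoidalCategory C] [SymmetricCategory C]
    [Preadditive C] [HasZeroObject C] [HasShift C ℤ]
    [∀ n : ℤ, (shiftFunctor C n).Additive] [Pretriangulated C]
    [∀ W : C, (tensorLeft W).Additive] [∀ W : C, (tensorRight W).Additive]
    [∀ W : C, (tensorLeft W).CommShift ℤ] [∀ W : C, (tensorRight W).CommShift ℤ]
    [∀ W : C, (tensorLeft W).IsTriangulated] [∀ W : C, (tensorRight W).IsTriangulated]
    {A' E : C} (ε : A' ⟶ 𝟙_ C) (η : 𝟙_ C ⟶ E) (δ : E ⟶ A'⟦(1 : ℤ)⟧)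
    (hT : Triangle.mk ε η δ ∈ distTriang C)
    (hA : IsIso ((ε ▷ A') ≫ (λ_ A').hom)) (X Y : C) :
    Function.Bijective
      (fun g : (E ⊗ X ⟶ E ⊗ Y) => (λ_ X).inv ≫ (η ▷ X) ≫ g) :=
  stmt_4_general ε η δ hT hA X Y
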